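/- arXiv:2004.09462 — 6 statements merged into one kernel-verified Lean document; each statement's English description precedes it below -/
import Mathlib

section
/- Let g : [0,1] → [0,1] be a strictly increasing continuous bijection with g(0)=0 and g(1)=1, let δ ∈ (0,1], and let F ⊆ {x ∈ [0,1) : for every ε ∈ (0,δ) there exists N such that |g(I_n(x))| ≤ 2^{-n(δ-ε)} for all n ≥ N}. Then dim_H g(F) ≤ (dim_H F)/δ. -/
/-!
Fix `s < δ` and let `F_N` be the set of points `x ∈ F` with `|g(I_n(x))| ≤ 2^(-ns)` for all
`n ≥ N`. The sets `F_N` exhaust `F`, so by countable stability of the Hausdorff dimension it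
suffices to bound `dim_H g(F_N)`.

The map `g` is `s`-Hölder on `F_N` (`abs_sub_le_of_dyadic`): if `2^(-(n+1)) < y - x ≤ 2^(-n)`
with `n ≥ N`, then `I_n(x)` and `I_n(y)` coincide or are adjacent, so `[g x, g y]` is covered by
their images and `g y - g x ≤ 2 · 2^(-ns) ≤ 4 (y - x)^s`; pairs with `y - x > 2^(-N)` only affect
the Hölder constant because `g` is bounded by `1`. Hence `dim_H g(F) ≤ (dim_H F) / s` for all
`s < δ`, and the theorem follows by letting `s → δ`.
-/

open MeasureTheory Filter Set

/-- Left endpoint of the dyadic interval of generation `n` containing `x`. -/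
noncomputable def dyadLeft (n : ℕ) (x : ℝ) : ℝ := (⌊x * 2 ^ n⌋ : ℝ) / 2 ^ n

/-- Right endpoint of the dyadic interval of generation `n` containing `x`. -/
noncomputable def dyadRight (n : ℕ) (x : ℝ) : ℝ := ((⌊x * 2 ^ n⌋ : ℝ) + 1) / 2 ^ n

lemma dyadLeft_nonneg (n : ℕ) {x : ℝ} (hx : 0 ≤ x) : 0 ≤ dyadLeft n x := by
  unfold dyadLeft
  have : (0 : ℤ) ≤ ⌊x * 2 ^ n⌋ := Int.floor_nonneg.2 (by positivity)
  have : (0 : ℝ) ≤ (⌊x * 2 ^ n⌋ : ℝ) := by exact_mod_cast this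
  positivity

lemma dyadLeft_le (n : ℕ) (x : ℝ) : dyadLeft n x ≤ x := by
  unfold dyadLeft
  rw [div_le_iff₀ (by positivity)]
  exact Int.floor_le _

lemma le_dyadRight (n : ℕ) (x : ℝ) : x ≤ dyadRight n x := by
  unfold dyadRight
  rw [le_div_iff₀ (by positivity)]
  exact (Int.lt_floor_add_one _).le

lemma dyadRight_le_one (n : ℕ) {x : ℝ} (hx : x < 1) : dyadRight n x ≤ 1 := by
  unfold dyadRight
  rw [div_le_one (by positivity)]
  have h : ⌊x * 2 ^ n⌋ < (2 : ℤ) ^ n := by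
    rw [Int.floor_lt]
    push_cast
    have : (0 : ℝ) < 2 ^ n := by positivity
    nlinarith
  exact_mod_cast h

/-- There is no gap between the dyadic intervals of generation `n` containing `x` and `y` when
`y` exceeds `x` by at most `2^(-n)`. -/
lemma dyadLeft_le_dyadRight (n : ℕ) {x y : ℝ} (h : y - x ≤ (1 / 2) ^ n) :
    dyadLeft n y ≤ dyadRight n x := by
  unfold dyadLeft dyadRight
  have h2 : (0 : ℝ) < 2 ^ n := by positivity
  have h1 : y * 2 ^ n ≤ x * 2 ^ n + 1 := by
    rw [one_div, inv_pow, ← one_div, le_div_iff₀ h2] at h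
    linarith
  have : ⌊y * 2 ^ n⌋ ≤ ⌊x * 2 ^ n⌋ + 1 := by
    rw [← Int.floor_add_one]
    exact Int.floor_le_floor h1
  gcongr
  exact_mod_cast this

/-- The local Hölder estimate: if the images of all dyadic intervals of generation `n ≥ N`
around `x` and `y` have length at most `2^(-ns)`, then `g` satisfies an `s`-Hölder bound at the
pair `x < y`, with a constant depending only on `N`. -/
lemma abs_sub_le_of_dyadic {g : ℝ → ℝ} (hmono : MonotoneOn g (Icc 0 1))
    (hg0 : g 0 = 0) (hg1 : g 1 = 1) {s : ℝ} (hs0 : 0 < s) (hs1 : s ≤ 1) {N : ℕ} {x y : ℝ}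
    (hx : x ∈ Ico (0 : ℝ) 1) (hy : y ∈ Ico (0 : ℝ) 1) (hxy : x < y)
    (hbx : ∀ n ≥ N, g (dyadRight n x) - g (dyadLeft n x) ≤ (2 : ℝ) ^ (-(n : ℝ) * s))
    (hby : ∀ n ≥ N, g (dyadRight n y) - g (dyadLeft n y) ≤ (2 : ℝ) ^ (-(n : ℝ) * s)) :
    |g x - g y| ≤ 4 * 2 ^ N * |x - y| ^ s := by
  have hxI : x ∈ Icc (0 : ℝ) 1 := ⟨hx.1, hx.2.le⟩
  have hyI : y ∈ Icc (0 : ℝ) 1 := ⟨hy.1, hy.2.le⟩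
  have hd : 0 < y - x := sub_pos.2 hxy
  have hgxy : g x ≤ g y := hmono hxI hyI hxy.le
  have hN : (1 : ℝ) ≤ 2 ^ N := one_le_pow₀ (by norm_num)
  rw [abs_sub_comm, abs_of_nonneg (sub_nonneg.2 hgxy), abs_sub_comm, abs_of_pos hd]
  obtain ⟨n, hn1, hn2⟩ := exists_nat_pow_near_of_lt_one hd (by linarith [hx.1, hy.2])
    (by norm_num : (0 : ℝ) < 1 / 2) (by norm_num)
  -- The scale `n` satisfies `2^(-ns) ≤ 2 (y - x)^s`.
  have hscale : (2 : ℝ) ^ (-(n : ℝ) * s) ≤ 2 * (y - x) ^ s := by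
    have e : (2 : ℝ) ^ (-(n : ℝ) * s) = ((1 / 2 : ℝ) ^ n) ^ s := by
      rw [Real.rpow_mul (by norm_num), Real.rpow_neg (by norm_num), Real.rpow_natCast,
        one_div, inv_pow]
    rw [e]
    calc ((1 / 2 : ℝ) ^ n) ^ s ≤ (2 * (y - x)) ^ s := by
          apply Real.rpow_le_rpow (by positivity) _ hs0.le
          rw [pow_succ] at hn1
          linarith
      _ = 2 ^ s * (y - x) ^ s := Real.mul_rpow (by norm_num) hd.le
      _ ≤ 2 * (y - x) ^ s := by
          gcongr
          simpa using Real.rpow_le_rpow_of_exponent_le (by norm_num : (1 : ℝ) ≤ 2) hs1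
  have hpos : 0 < (y - x) ^ s := Real.rpow_pos_of_pos hd s
  by_cases hnN : N ≤ n
  · have a1 := hbx n hnN
    have a2 := hby n hnN
    have lx : dyadLeft n x ∈ Icc (0 : ℝ) 1 :=
      ⟨dyadLeft_nonneg n hx.1, (dyadLeft_le n x).trans hxI.2⟩
    have ly : dyadLeft n y ∈ Icc (0 : ℝ) 1 :=
      ⟨dyadLeft_nonneg n hy.1, (dyadLeft_le n y).trans hyI.2⟩
    have rx : dyadRight n x ∈ Icc (0 : ℝ) 1 :=
      ⟨hx.1.trans (le_dyadRight n x), dyadRight_le_one n hx.2⟩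
    have ry : dyadRight n y ∈ Icc (0 : ℝ) 1 :=
      ⟨hy.1.trans (le_dyadRight n y), dyadRight_le_one n hy.2⟩
    have b1 := hmono lx hxI (dyadLeft_le n x)
    have b2 := hmono hyI ry (le_dyadRight n y)
    have b3 := hmono ly rx (dyadLeft_le_dyadRight n hn2)
    nlinarith
  · -- Here `g y - g x ≤ 1`, while `2^N (y - x)^s ≥ 2^N (y - x) ≥ 2^N 2^(-(n+1)) ≥ 1`.
    have b1 := hmono ⟨le_rfl, zero_le_one⟩ hxI hx.1
    have b2 := hmono hyI ⟨zero_le_one, le_rfl⟩ hy.2.le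
    have c1 : y - x ≤ (y - x) ^ s := by
      simpa using Real.rpow_le_rpow_of_exponent_ge hd (by linarith [hx.1, hy.2]) hs1
    have c2 : (1 / 2 : ℝ) ^ N ≤ (1 / 2) ^ (n + 1) :=
      pow_le_pow_of_le_one (by norm_num) (by norm_num) (by omega)
    have c3 : (2 : ℝ) ^ N * (1 / 2) ^ N = 1 := by
      rw [← mul_pow]; norm_num
    nlinarith

/-- The dimension bound for a fixed exponent `s`, by splitting `F` into countably many pieces on
which `g` is `s`-Hölder. -/
lemma dimH_image_le_of_dyadic {g : ℝ → ℝ} (hmono : MonotoneOn g (Icc 0 1))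
    (hg0 : g 0 = 0) (hg1 : g 1 = 1) {s : ℝ} (hs0 : 0 < s) (hs1 : s ≤ 1) {F : Set ℝ}
    (hF : F ⊆ {x ∈ Ico (0 : ℝ) 1 | ∃ N : ℕ, ∀ n ≥ N,
        g (dyadRight n x) - g (dyadLeft n x) ≤ (2 : ℝ) ^ (-(n : ℝ) * s)}) :
    dimH (g '' F) ≤ dimH F / ENNReal.ofReal s := by
  let A : ℕ → Set ℝ := fun N => {x ∈ F | ∀ n ≥ N,
        g (dyadRight n x) - g (dyadLeft n x) ≤ (2 : ℝ) ^ (-(n : ℝ) * s)}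
  have hA : F ⊆ ⋃ N, A N := fun x hx => by
    obtain ⟨N, hN⟩ := (hF hx).2
    exact mem_iUnion.2 ⟨N, hx, hN⟩
  have hH : ∀ N, HolderOnWith (4 * 2 ^ N) s.toNNReal g (A N) := by
    intro N x hx y hy
    have key : |g x - g y| ≤ 4 * 2 ^ N * |x - y| ^ s := by
      rcases lt_trichotomy x y with h | h | h
      · exact abs_sub_le_of_dyadic hmono hg0 hg1 hs0 hs1 (hF hx.1).1 (hF hy.1).1 h hx.2 hy.2
      · subst h
        simp only [sub_self, abs_zero]
        positivity
      · rw [abs_sub_comm, abs_sub_comm x]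
        exact abs_sub_le_of_dyadic hmono hg0 hg1 hs0 hs1 (hF hy.1).1 (hF hx.1).1 h hy.2 hx.2
    rw [edist_dist, edist_dist, Real.dist_eq, Real.dist_eq, Real.coe_toNNReal _ hs0.le,
      ENNReal.ofReal_rpow_of_nonneg (abs_nonneg _) hs0.le]
    refine (ENNReal.ofReal_le_ofReal key).trans ?_
    rw [ENNReal.ofReal_mul (by positivity)]
    gcongr
    rw [ENNReal.ofReal_mul (by norm_num), ENNReal.ofReal_pow (by norm_num)]
    simp
  calc dimH (g '' F) ≤ dimH (⋃ N, g '' A N) := by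
        rw [← image_iUnion]
        exact dimH_mono (image_mono hA)
    _ = ⨆ N, dimH (g '' A N) := dimH_iUnion _
    _ ≤ dimH F / ENNReal.ofReal s := iSup_le fun N =>
        ((hH N).dimH_image_le (Real.toNNReal_pos.2 hs0)).trans
          (ENNReal.div_le_div_right (dimH_mono fun x hx => hx.1) _)

/-- If `g` is an increasing homeomorphism of `[0,1]`, `δ ∈ (0,1]`, and `F` is contained in the
set of points `x ∈ [0,1)` such that for every `ε ∈ (0,δ)` one has
`|g(I_n(x))| ≤ 2^(-n(δ-ε))` for all large `n`, then `dim_H g(F) ≤ (dim_H F)/δ`. -/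
theorem stmt2 (g : ℝ → ℝ)
    (hmono : StrictMonoOn g (Icc 0 1)) (hcont : ContinuousOn g (Icc 0 1))
    (hg0 : g 0 = 0) (hg1 : g 1 = 1)
    (δ : ℝ) (hδ : δ ∈ Ioc (0:ℝ) 1) (F : Set ℝ)
    (hF : F ⊆ {x ∈ Ico (0:ℝ) 1 | ∀ ε ∈ Ioo (0:ℝ) δ, ∃ N : ℕ, ∀ n ≥ N,
        g (dyadRight n x) - g (dyadLeft n x) ≤ (2:ℝ) ^ (-(n:ℝ) * (δ - ε))}) :
    dimH (g '' F) ≤ dimH F / ENNReal.ofReal δ := by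
  have hle : ∀ s ∈ Ioo 0 δ, dimH (g '' F) ≤ dimH F / ENNReal.ofReal s := by
    intro s hs
    refine dimH_image_le_of_dyadic hmono.monotoneOn hg0 hg1 hs.1 (hs.2.le.trans hδ.2)
      fun x hx => ⟨(hF hx).1, ?_⟩
    simpa using (hF hx).2 (δ - s) ⟨sub_pos.2 hs.2, by linarith [hs.1]⟩
  have hlim : Tendsto (fun s : ℝ => dimH F / ENNReal.ofReal s) (nhdsWithin δ (Iio δ))
      (nhds (dimH F / ENNReal.ofReal δ)) := by
    refine ENNReal.Tendsto.const_div ?_ (Or.inr (Real.dimH_ne_top F))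
    exact (ENNReal.continuous_ofReal.tendsto δ).mono_left nhdsWithin_le_nhds
  refine ge_of_tendsto hlim ?_
  filter_upwards [Ioo_mem_nhdsLT hδ.1] with s hs using hle s hs
end

section
/- Let k > 0, let F ⊆ [0,1], and let g : F → ℝ be injective and satisfy |g(x) − g(y)| ≤ (log(2/|x−y|))^{-k} for all distinct x, y ∈ F. Let ν be a finite Borel measure on ℝ supported on g(F) with finite (1/k)-Riesz energy ∬ |u−v|^{-1/k} dν(u)dν(v) < ∞. Then the pullback measure μ := (g^{-1})_*ν (the image of ν under the inverse map g^{-1} : g(F) → F) has finite logarithmic energy; in fact ∬ log(2/|x−y|) dμ(x)dμ(y) ≤ ∬ |u−v|^{-1/k} dν(u)dν(v) < ∞. -/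
open MeasureTheory Filter Set

/-!
Pointwise, the modulus of continuity `|g x - g y| ≤ L ^ (-k)` with `L = log (2 / |x - y|) > 0`
rearranges to `L ≤ |g x - g y| ^ (-1/k)`, while on the diagonal the bound is trivial.
Integrating against `ν × ν`, which is carried by pairs `(g x, g y)` with `x, y ∈ F`, and changing
variables along `ginv` gives the comparison of energies.
-/

/-- The kernel comparison: inverting the modulus bound `d ≤ L ^ (-k)`. It is stated in `ℝ≥0∞`,
so that it covers `d = 0`, where the right-hand side is `⊤`. -/
theorem ofReal_le_rpow_of_le_rpow_neg {k L d : ℝ} (hk : 0 < k) (hL : 0 < L)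
    (h : d ≤ L ^ (-k)) : ENNReal.ofReal L ≤ (ENNReal.ofReal d) ^ (-(1 / k)) := by
  have h1 : ENNReal.ofReal d ≤ (ENNReal.ofReal L) ^ (-k) := by
    rw [ENNReal.ofReal_rpow_of_pos hL]
    exact ENNReal.ofReal_le_ofReal h
  calc ENNReal.ofReal L = ((ENNReal.ofReal L) ^ (-k)) ^ (-(1 / k)) := by
        rw [← ENNReal.rpow_mul, show -k * -(1 / k) = 1 by field_simp, ENNReal.rpow_one]
    _ ≤ (ENNReal.ofReal d) ^ (-(1 / k)) := by
        rw [ENNReal.rpow_neg _ (1 / k), ENNReal.rpow_neg _ (1 / k)]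
        exact ENNReal.inv_le_inv.mpr (ENNReal.rpow_le_rpow h1 (by positivity))

/-- Energy comparison: if `g : F → ℝ` is injective with logarithmic modulus of continuity of
order `k`, and `ν` is a finite Borel measure supported on `g(F)` with finite `(1/k)`-Riesz
energy, then the pullback measure `μ = (g⁻¹)_* ν` has finite logarithmic energy, bounded by
the Riesz energy of `ν`. -/
theorem stmt3 (k : ℝ) (hk : 0 < k) (F : Set ℝ) (hF : F ⊆ Icc (0:ℝ) 1)
    (g ginv : ℝ → ℝ) (hinj : InjOn g F)
    (hmod : ∀ x ∈ F, ∀ y ∈ F, x ≠ y →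
      |g x - g y| ≤ (Real.log (2 / |x - y|)) ^ (-k))
    (hginv : ∀ x ∈ F, ginv (g x) = x) (hginvmeas : Measurable ginv)
    (ν : Measure ℝ) [IsFiniteMeasure ν] (hsupp : ν ((g '' F)ᶜ) = 0)
    (henergy : (∫⁻ u, ∫⁻ v, (ENNReal.ofReal |u - v|) ^ (-(1 / k)) ∂ν ∂ν) < ⊤) :
    (∫⁻ x, ∫⁻ y, ENNReal.ofReal (Real.log (2 / |x - y|)) ∂(ν.map ginv) ∂(ν.map ginv)) ≤
        (∫⁻ u, ∫⁻ v, (ENNReal.ofReal |u - v|) ^ (-(1 / k)) ∂ν ∂ν) ∧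
      (∫⁻ x, ∫⁻ y, ENNReal.ofReal (Real.log (2 / |x - y|)) ∂(ν.map ginv) ∂(ν.map ginv)) < ⊤ := by
  have key : (∫⁻ x, ∫⁻ y, ENNReal.ofReal (Real.log (2 / |x - y|))
      ∂(ν.map ginv) ∂(ν.map ginv)) ≤
        (∫⁻ u, ∫⁻ v, (ENNReal.ofReal |u - v|) ^ (-(1 / k)) ∂ν ∂ν) := by
    have hae : ∀ᵐ u ∂ν, u ∈ g '' F := hsupp
    -- Only `≤` is needed for the change of variables, so no measurability of the kernel enters.
    refine (lintegral_map_le _ ginv).trans (lintegral_mono_ae ?_)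
    filter_upwards [hae] with u hu
    refine (lintegral_map_le _ ginv).trans (lintegral_mono_ae ?_)
    filter_upwards [hae] with v hv
    obtain ⟨x, hx, rfl⟩ := hu
    obtain ⟨y, hy, rfl⟩ := hv
    rw [hginv x hx, hginv y hy]
    rcases eq_or_ne x y with rfl | hxy
    · -- `Real.log (2 / 0) = 0`; with the conventional value `∞` the bound would hold as well,
      -- the Riesz kernel being `⊤` there.
      simp
    · have hpos : 0 < |x - y| := abs_pos.mpr (sub_ne_zero.mpr hxy)
      have hle : |x - y| ≤ 1 := by
        have := hF hx
        have := hF hy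
        simp only [mem_Icc] at *
        rw [abs_le]
        constructor <;> linarith
      refine ofReal_le_rpow_of_le_rpow_neg hk (Real.log_pos ?_) (hmod x hx y hy hxy)
      rw [lt_div_iff₀ hpos]
      linarith
  exact ⟨key, key.trans_lt henergy⟩
end

section
/- Let X be a nonnegative random variable and c > 0 a constant such that P(X ≥ t) ≤ c/t for all t > 0, and let β > 1. Then for every λ > 0, 1 − E[exp(−λ X^β)] ≤ Γ(1 − 1/β) c λ^{1/β}. -/
/-!
With `Y = X ^ β`, the layer cake formula with weight `l * exp (-l * t)` gives
`1 - E[exp (-l * Y)] = ∫ t in (0, ∞), P (Y ≥ t) * l * exp (-l * t)`.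
Since `Y ≥ t` iff `X ≥ t ^ (1 / β)`, the tail bound gives `P (Y ≥ t) ≤ c * t ^ (-1 / β)`, and
the remaining integral `∫ t ^ (-1 / β) * exp (-l * t)` is a Gamma integral, convergent because
`1 / β < 1`.
-/

open MeasureTheory Filter Set

lemma integral_mul_exp_neg_mul (l y : ℝ) :
    ∫ t in (0:ℝ)..y, l * Real.exp (-l * t) = 1 - Real.exp (-l * y) := by
  have h : ∀ t ∈ uIcc 0 y,
      HasDerivAt (fun t => -Real.exp (-l * t)) (l * Real.exp (-l * t)) t := by
    intro t _
    have h1 : HasDerivAt (fun t : ℝ => -l * t) (-l) t := by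
      simpa using (hasDerivAt_id t).const_mul (-l)
    convert! h1.exp.neg using 1
    ring
  rw [intervalIntegral.integral_eq_sub_of_hasDerivAt h
    (Continuous.intervalIntegrable (by fun_prop) _ _)]
  simp
  ring

/-- The Gamma integral, in the form the layer cake bound produces. -/
lemma lintegral_rpow_neg_mul_exp {c l β : ℝ} (hc : 0 < c) (hl : 0 < l) (hβ : 1 < β) :
    ∫⁻ t in Ioi (0:ℝ), ENNReal.ofReal (c / t ^ (1 / β) * (l * Real.exp (-l * t))) =
      ENNReal.ofReal (Real.Gamma (1 - 1 / β) * c * l ^ (1 / β)) := by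
  have ha : 0 < 1 - 1 / β := by
    rw [sub_pos, div_lt_one (by linarith)]; exact hβ
  have heq : ∀ t ∈ Ioi (0:ℝ), c / t ^ (1 / β) * (l * Real.exp (-l * t)) =
      (c * l) * (t ^ ((1 - 1 / β) - 1) * Real.exp (-(l * t))) := by
    intro t ht
    have : (1 - 1 / β) - 1 = -(1 / β) := by ring
    rw [this, Real.rpow_neg (le_of_lt ht), neg_mul]
    ring
  have hval := Real.integral_rpow_mul_exp_neg_mul_Ioi ha hl
  have hpos : 0 < ∫ t in Ioi (0:ℝ), t ^ ((1 - 1 / β) - 1) * Real.exp (-(l * t)) := by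
    rw [hval]
    have := Real.Gamma_pos_of_pos ha
    positivity
  -- A nonzero Bochner integral certifies integrability.
  have hint : IntegrableOn (fun t : ℝ => t ^ ((1 - 1 / β) - 1) * Real.exp (-(l * t))) (Ioi 0) :=
    Integrable.of_integral_ne_zero hpos.ne'
  rw [setLIntegral_congr_fun measurableSet_Ioi (fun t ht => by rw [heq t ht]),
    ← ofReal_integral_eq_lintegral_ofReal (hint.const_mul _), integral_const_mul, hval]
  · congr 1
    rw [Real.div_rpow zero_le_one hl.le, Real.one_rpow, Real.rpow_sub hl, Real.rpow_one]
    field_simp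
  · filter_upwards [ae_restrict_mem measurableSet_Ioi] with t ht
    have : (0:ℝ) < t := ht
    positivity

/-- Tail-to-Laplace estimate: if `X ≥ 0` satisfies `P(X ≥ t) ≤ c/t` for all `t > 0` and
`β > 1`, then for every `λ > 0`, `1 - E[exp(-λX^β)] ≤ Γ(1 - 1/β) c λ^{1/β}`. -/
theorem stmt8 {Ω : Type*} [MeasurableSpace Ω] (P : Measure Ω) [IsProbabilityMeasure P]
    (X : Ω → ℝ) (hX : Measurable X) (hX0 : ∀ ω, 0 ≤ X ω)
    (c : ℝ) (hc : 0 < c)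
    (htail : ∀ t > (0:ℝ), P {ω | t ≤ X ω} ≤ ENNReal.ofReal (c / t))
    (β : ℝ) (hβ : 1 < β) :
    ∀ l > (0:ℝ),
      1 - (∫⁻ ω, ENNReal.ofReal (Real.exp (-l * X ω ^ β)) ∂P) ≤
        ENNReal.ofReal (Real.Gamma (1 - 1 / β) * c * l ^ (1 / β)) := by
  intro l hl
  have hβ0 : 0 < β := by linarith
  have hY : Measurable fun ω => X ω ^ β := hX.pow_const β
  have hlayer := lintegral_comp_eq_lintegral_meas_le_mul (f := fun ω => X ω ^ β)
    (g := fun t => l * Real.exp (-l * t)) P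
    (Eventually.of_forall fun ω => Real.rpow_nonneg (hX0 ω) β) hY.aemeasurable
    (fun t _ => Continuous.intervalIntegrable (by fun_prop) _ _)
    (Eventually.of_forall fun t => by positivity)
  simp_rw [integral_mul_exp_neg_mul] at hlayer
  calc 1 - (∫⁻ ω, ENNReal.ofReal (Real.exp (-l * X ω ^ β)) ∂P)
      = (∫⁻ _, 1 ∂P) - ∫⁻ ω, ENNReal.ofReal (Real.exp (-l * X ω ^ β)) ∂P := by simp
    _ ≤ ∫⁻ ω, (1 - ENNReal.ofReal (Real.exp (-l * X ω ^ β))) ∂P :=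
        lintegral_sub_le _ _ (by fun_prop)
    _ = ∫⁻ ω, ENNReal.ofReal (1 - Real.exp (-l * X ω ^ β)) ∂P := by
        simp_rw [ENNReal.ofReal_sub _ (Real.exp_nonneg _), ENNReal.ofReal_one]
    _ = ∫⁻ t in Ioi 0, P {ω | t ≤ X ω ^ β} * ENNReal.ofReal (l * Real.exp (-l * t)) := hlayer
    _ ≤ ∫⁻ t in Ioi (0:ℝ),
          ENNReal.ofReal (c / t ^ (1 / β) * (l * Real.exp (-l * t))) := by
        refine setLIntegral_mono' measurableSet_Ioi fun t ht => ?_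
        have ht : (0:ℝ) < t := ht
        rw [ENNReal.ofReal_mul (p := c / t ^ (1 / β)) (by positivity)]
        refine mul_le_mul' ?_ le_rfl
        refine le_trans (measure_mono fun ω hω => ?_) (htail _ (Real.rpow_pos_of_pos ht (1 / β)))
        have hω : t ≤ X ω ^ β := hω
        show t ^ (1 / β) ≤ X ω
        rw [one_div]
        exact (Real.rpow_inv_le_iff_of_pos ht.le (hX0 ω) hβ0).2 hω
    _ = _ := lintegral_rpow_neg_mul_exp hc hl hβ
end

section
/- Let S be a nonnegative random variable, r ∈ (0,1] and C > 0 such that 1 − E[e^{−λS}] ≤ C λ^r for all λ ∈ (0,1]. Then for every q ∈ (0, r), E[S^q] ≤ (q/Γ(1−q)) (C/(r−q) + 1/q) < ∞. -/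
open MeasureTheory Filter Set

/-!
For `s ≥ 0` and `q ∈ (0,1)`, integration by parts and Euler's integral give
`∫_0^∞ λ^{-q-1} (1 - e^{-λs}) dλ = (Γ(1-q)/q) s^q` (`integral_rpow_mul_one_sub_exp`).
Putting `s = S ω` and taking expectations, Tonelli's theorem turns `(Γ(1-q)/q) E[S^q]` into
`∫_0^∞ λ^{-q-1} (1 - E[e^{-λS}]) dλ`. On `(0,1]` the hypothesis bounds the integrand by
`C λ^{r-q-1}`, with integral `C/(r-q)`; on `(1,∞)` the trivial bound `λ^{-q-1}` has
integral `1/q`.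
-/

lemma one_sub_exp_nonneg {l s : ℝ} (hl : 0 ≤ l) (hs : 0 ≤ s) : 0 ≤ 1 - Real.exp (-l * s) := by
  have : Real.exp (-l * s) ≤ 1 := Real.exp_le_one_iff.2 (by nlinarith [mul_nonneg hl hs])
  linarith

lemma one_sub_exp_le (l s : ℝ) : 1 - Real.exp (-l * s) ≤ l * s := by
  have := Real.add_one_le_exp (-l * s)
  linarith

lemma integrableOn_rpow_mul_one_sub_exp {q s : ℝ} (hq : 0 < q) (hq1 : q < 1) (hs : 0 ≤ s) :
    IntegrableOn (fun l : ℝ => l ^ (-q - 1) * (1 - Real.exp (-l * s))) (Ioi 0) := by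
  have hm : Measurable (fun l : ℝ => l ^ (-q - 1) * (1 - Real.exp (-l * s))) := by fun_prop
  rw [← Ioc_union_Ioi_eq_Ioi (zero_le_one (α := ℝ))]
  refine IntegrableOn.union ?_ ?_
  · have h1 : IntegrableOn (fun l : ℝ => l ^ (-q) * s) (Ioc 0 1) :=
      ((intervalIntegrable_iff_integrableOn_Ioc_of_le zero_le_one).1
        (intervalIntegral.intervalIntegrable_rpow' (by linarith))).mul_const s
    refine Integrable.mono' h1 hm.aestronglyMeasurable ?_
    filter_upwards [ae_restrict_mem measurableSet_Ioc] with l hl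
    have hp := Real.rpow_nonneg hl.1.le (-q - 1)
    rw [Real.norm_of_nonneg (mul_nonneg hp (one_sub_exp_nonneg hl.1.le hs))]
    calc _ ≤ l ^ (-q - 1) * (l * s) := mul_le_mul_of_nonneg_left (one_sub_exp_le l s) hp
      _ = l ^ (-q) * s := by
        rw [Real.rpow_sub_one hl.1.ne']
        have := hl.1.ne'
        field_simp
  · refine Integrable.mono' (integrableOn_Ioi_rpow_of_lt (a := -q - 1) (by linarith) one_pos)
      hm.aestronglyMeasurable ?_
    filter_upwards [ae_restrict_mem measurableSet_Ioi] with l hl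
    have hl0 : 0 < l := lt_trans one_pos hl
    have hp := Real.rpow_nonneg hl0.le (-q - 1)
    rw [Real.norm_of_nonneg (mul_nonneg hp (one_sub_exp_nonneg hl0.le hs))]
    exact mul_le_of_le_one_right hp (by linarith [Real.exp_pos (-l * s)])

lemma integral_rpow_mul_one_sub_exp {q s : ℝ} (hq : 0 < q) (hq1 : q < 1) (hs : 0 ≤ s) :
    ∫ l in Ioi (0:ℝ), l ^ (-q - 1) * (1 - Real.exp (-l * s)) =
      Real.Gamma (1 - q) / q * s ^ q := by
  rcases hs.eq_or_lt with rfl | hs'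
  · simp [Real.zero_rpow hq.ne']
  have hI := integrableOn_rpow_mul_one_sub_exp hq hq1 hs
  have hE : ∫ l in Ioi (0:ℝ), l ^ (-q) * Real.exp (-(s * l)) =
      (1 / s) ^ (1 - q) * Real.Gamma (1 - q) := by
    have := Real.integral_rpow_mul_exp_neg_mul_Ioi (a := 1 - q) (by linarith) hs'
    rwa [show 1 - q - 1 = -q by ring] at this
  have hJ : IntegrableOn (fun l : ℝ => l ^ (-q) * Real.exp (-(s * l))) (Ioi 0) := by
    have := integrableOn_rpow_mul_exp_neg_mul_rpow (s := -q) (p := 1) (b := s)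
      (by linarith) one_pos hs'
    simpa using this
  have hd : ∀ l ∈ Ioi (0:ℝ), HasDerivAt (fun l : ℝ => l ^ (-q) * (1 - Real.exp (-l * s)))
      (-q * (l ^ (-q - 1) * (1 - Real.exp (-l * s))) + s * (l ^ (-q) * Real.exp (-(s * l)))) l := by
    intro l hl
    have h1 := Real.hasDerivAt_rpow_const (x := l) (p := -q) (Or.inl (ne_of_gt hl))
    have h2 := (((hasDerivAt_id l).neg.mul_const s).exp).const_sub 1
    refine (h1.mul h2).congr_deriv ?_
    simp only [id, Pi.neg_apply]
    rw [show -(s * l) = -l * s by ring]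
    ring
  have hpow : Tendsto (fun l : ℝ => l ^ (-q)) atTop (nhds 0) := tendsto_rpow_neg_atTop hq
  have hinf : Tendsto (fun l : ℝ => l ^ (-q) * (1 - Real.exp (-l * s))) atTop (nhds 0) := by
    refine squeeze_zero' ?_ ?_ hpow
    · filter_upwards [eventually_ge_atTop 0] with l hl
      exact mul_nonneg (Real.rpow_nonneg hl _) (one_sub_exp_nonneg hl hs)
    · filter_upwards [eventually_ge_atTop 0] with l hl
      exact mul_le_of_le_one_right (Real.rpow_nonneg hl _) (by linarith [Real.exp_pos (-l * s)])
  -- The boundary term vanishes at `0` because it is at most `s * l ^ (1 - q)` there.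
  have hzero : ContinuousWithinAt (fun l : ℝ => l ^ (-q) * (1 - Real.exp (-l * s))) (Ici 0) 0 := by
    have h0 : Tendsto (fun l : ℝ => l ^ (1 - q) * s) (nhdsWithin 0 (Ici 0)) (nhds 0) := by
      have : Continuous (fun l : ℝ => l ^ (1 - q) * s) :=
        (Real.continuous_rpow_const (by linarith)).mul_const s
      have h := (this.tendsto 0).mono_left (nhdsWithin_le_nhds (s := Ici 0))
      rwa [Real.zero_rpow (by linarith), zero_mul] at h
    rw [ContinuousWithinAt]
    simp only [neg_zero, zero_mul, Real.exp_zero, sub_self, mul_zero]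
    refine squeeze_zero' ?_ ?_ h0
    · filter_upwards [self_mem_nhdsWithin] with l hl
      exact mul_nonneg (Real.rpow_nonneg hl _) (one_sub_exp_nonneg hl hs)
    · filter_upwards [self_mem_nhdsWithin] with l hl
      rcases (mem_Ici.1 hl).eq_or_lt with rfl | hl'
      · simp [Real.zero_rpow (show 1 - q ≠ 0 by linarith)]
      calc _ ≤ l ^ (-q) * (l * s) :=
            mul_le_mul_of_nonneg_left (one_sub_exp_le l s) (Real.rpow_nonneg hl _)
        _ = l ^ (1 - q) * s := by
            rw [show 1 - q = -q + 1 by ring, Real.rpow_add_one hl'.ne']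
            ring
  have hF := integral_Ioi_of_hasDerivAt_of_tendsto hzero hd
    ((hI.const_mul (-q)).add (hJ.const_mul s)) hinf
  rw [integral_add (hI.const_mul (-q)) (hJ.const_mul s), integral_const_mul, integral_const_mul,
    hE] at hF
  simp only [neg_zero, zero_mul, Real.exp_zero, sub_self, mul_zero] at hF
  have hsq : s * (1 / s) ^ (1 - q) = s ^ q := by
    rw [one_div, Real.inv_rpow hs, ← Real.rpow_neg hs, neg_sub, Real.rpow_sub_one hs'.ne']
    field_simp
  rw [← hsq, div_mul_eq_mul_div, eq_div_iff hq.ne']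
  linarith

/-- Laplace-transform-to-moment step: if `S ≥ 0` satisfies `1 - E[e^{-λS}] ≤ Cλ^r` for all
`λ ∈ (0,1]`, with `r ∈ (0,1]` and `C > 0`, then for every `q ∈ (0,r)`,
`E[S^q] ≤ (q/Γ(1-q))(C/(r-q) + 1/q) < ∞`. -/
theorem stmt10 {Ω : Type*} [MeasurableSpace Ω] (P : Measure Ω) [IsProbabilityMeasure P]
    (S : Ω → ℝ) (hS : Measurable S) (hS0 : ∀ ω, 0 ≤ S ω)
    (r C : ℝ) (hr : r ∈ Ioc (0:ℝ) 1) (hC : 0 < C)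
    (hlap : ∀ l ∈ Ioc (0:ℝ) 1, 1 - ∫ ω, Real.exp (-l * S ω) ∂P ≤ C * l ^ r) :
    ∀ q ∈ Ioo (0:ℝ) r,
      ∫⁻ ω, ENNReal.ofReal (S ω ^ q) ∂P ≤
        ENNReal.ofReal ((q / Real.Gamma (1 - q)) * (C / (r - q) + 1 / q)) := by
  rintro q ⟨hq, hqr⟩
  have hq1 : q < 1 := hqr.trans_le hr.2
  have hrq : 0 < r - q := sub_pos.2 hqr
  have hG : 0 < Real.Gamma (1 - q) := Real.Gamma_pos_of_pos (by linarith)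
  have hpt : ∀ ω, ENNReal.ofReal (S ω ^ q) = ENNReal.ofReal (q / Real.Gamma (1 - q)) *
      ∫⁻ l in Ioi (0:ℝ), ENNReal.ofReal (l ^ (-q - 1) * (1 - Real.exp (-l * S ω))) := by
    intro ω
    rw [← ofReal_integral_eq_lintegral_ofReal
      (integrableOn_rpow_mul_one_sub_exp hq hq1 (hS0 ω)) ?_,
      integral_rpow_mul_one_sub_exp hq hq1 (hS0 ω), ← ENNReal.ofReal_mul (by positivity)]
    · congr 1
      field_simp
    · filter_upwards [ae_restrict_mem measurableSet_Ioi] with l hl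
      exact mul_nonneg (Real.rpow_nonneg (le_of_lt hl) _) (one_sub_exp_nonneg (le_of_lt hl) (hS0 ω))
  have hm : Measurable (fun p : Ω × ℝ =>
      ENNReal.ofReal (p.2 ^ (-q - 1) * (1 - Real.exp (-p.2 * S p.1)))) := by fun_prop
  have hin : ∀ l : ℝ, 0 < l →
      ∫⁻ ω, ENNReal.ofReal (l ^ (-q - 1) * (1 - Real.exp (-l * S ω))) ∂P =
        ENNReal.ofReal (l ^ (-q - 1) * (1 - ∫ ω, Real.exp (-l * S ω) ∂P)) := by
    intro l hl
    have hi : Integrable (fun ω => Real.exp (-l * S ω)) P := by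
      refine Integrable.of_bound (C := 1) (by fun_prop) (ae_of_all _ fun ω => ?_)
      rw [Real.norm_of_nonneg (Real.exp_pos _).le]
      linarith [one_sub_exp_nonneg hl.le (hS0 ω)]
    have hi' : Integrable (fun ω => l ^ (-q - 1) * (1 - Real.exp (-l * S ω))) P :=
      ((integrable_const 1).sub hi).const_mul _
    rw [← ofReal_integral_eq_lintegral_ofReal hi'
      (ae_of_all _ fun ω => mul_nonneg (Real.rpow_nonneg hl.le _)
        (one_sub_exp_nonneg hl.le (hS0 ω))), integral_const_mul,
      integral_sub (integrable_const 1) hi]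
    simp
  have hA : ∫⁻ l in Ioc (0:ℝ) 1,
      ∫⁻ ω, ENNReal.ofReal (l ^ (-q - 1) * (1 - Real.exp (-l * S ω))) ∂P ≤
        ENNReal.ofReal (C / (r - q)) := by
    have hi : IntegrableOn (fun l : ℝ => C * l ^ (r - q - 1)) (Ioc 0 1) :=
      ((intervalIntegrable_iff_integrableOn_Ioc_of_le zero_le_one).1
        (intervalIntegral.intervalIntegrable_rpow' (by linarith))).const_mul C
    have hv : ∫ l in Ioc (0:ℝ) 1, C * l ^ (r - q - 1) = C / (r - q) := by
      rw [integral_const_mul, ← intervalIntegral.integral_of_le zero_le_one,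
        integral_rpow (Or.inl (by linarith)), sub_add_cancel, Real.one_rpow,
        Real.zero_rpow hrq.ne', sub_zero, mul_one_div]
    rw [← hv, ofReal_integral_eq_lintegral_ofReal hi ?_]
    · refine setLIntegral_mono' measurableSet_Ioc fun l hl => ?_
      rw [hin l hl.1]
      refine ENNReal.ofReal_le_ofReal ?_
      calc _ ≤ l ^ (-q - 1) * (C * l ^ r) :=
            mul_le_mul_of_nonneg_left (hlap l hl) (Real.rpow_nonneg hl.1.le _)
        _ = C * l ^ (r - q - 1) := by
            rw [show r - q - 1 = (-q - 1) + r by ring, Real.rpow_add hl.1]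
            ring
    · filter_upwards [ae_restrict_mem measurableSet_Ioc] with l hl
      exact mul_nonneg hC.le (Real.rpow_nonneg hl.1.le _)
  have hB : ∫⁻ l in Ioi (1:ℝ),
      ∫⁻ ω, ENNReal.ofReal (l ^ (-q - 1) * (1 - Real.exp (-l * S ω))) ∂P ≤
        ENNReal.ofReal (1 / q) := by
    have hv : ∫ l in Ioi (1:ℝ), l ^ (-q - 1) = 1 / q := by
      rw [integral_Ioi_rpow_of_lt (by linarith) one_pos, sub_add_cancel, Real.one_rpow,
        neg_div_neg_eq]
    rw [← hv, ofReal_integral_eq_lintegral_ofReal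
      (integrableOn_Ioi_rpow_of_lt (by linarith) one_pos) ?_]
    · refine setLIntegral_mono' measurableSet_Ioi fun l hl => ?_
      have hl0 : 0 < l := lt_trans one_pos hl
      rw [hin l hl0]
      refine ENNReal.ofReal_le_ofReal (mul_le_of_le_one_right (Real.rpow_nonneg hl0.le _) ?_)
      have : 0 ≤ ∫ ω, Real.exp (-l * S ω) ∂P := integral_nonneg fun ω => (Real.exp_pos _).le
      linarith
    · filter_upwards [ae_restrict_mem measurableSet_Ioi] with l hl
      exact Real.rpow_nonneg (lt_trans one_pos hl).le _
  simp_rw [hpt]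
  rw [lintegral_const_mul' _ _ ENNReal.ofReal_ne_top, lintegral_lintegral_swap hm.aemeasurable,
    ENNReal.ofReal_mul (by positivity), ENNReal.ofReal_add (by positivity) (by positivity),
    ← Ioc_union_Ioi_eq_Ioi (zero_le_one (α := ℝ))]
  gcongr
  exact (lintegral_union_le _ _ _).trans (add_le_add hA hB)
end

section
/- Let (Ω, F, P) be a probability space and h a random increasing homeomorphism of [0,1] (for each ω, h_ω : [0,1] → [0,1] is a strictly increasing continuous bijection with h_ω(0)=0, h_ω(1)=1, and ω ↦ h_ω(x) is measurable for each x). Let δ ∈ (2,4) and set η := 1 − δ/2 ∈ (−1,0). Assume there is C > 0 such that E[|h(I)|^η] ≤ C|I|^{2η−η²} for every dyadic interval I ⊆ [0,1]. Then almost surely the set {x ∈ [0,1) : for every ε > 0 there exists N such that |h(I_n(x))| ≤ 2^{−n(δ−ε)} for all n ≥ N} has Hausdorff dimension at most δ − δ²/4. -/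
/-!
Write `Δ_{n,j}` for the increment of `h` over the `j`-th dyadic interval of generation `n`, and
`η = 1 - δ/2 < 0`. If `Δ_{n,j} ≤ 2^{-na}` then `1 ≤ 2^{naη} Δ_{n,j}^η`, so the `d`-dimensional cost
of covering by those generation-`n` intervals which satisfy this bound is at most
`Z_n = 2^{n(aη - d)} ∑_j Δ_{n,j}^η` (`dyadCost`). Hence every set of points whose dyadic intervals
satisfy the bound from some fixed generation on is `μH[d]`-null as soon as `Z_n → 0`
(`hausdorffMeasure_eq_zero_of_dyadCost`).

With `a = δ - ε` the moment hypothesis gives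
`E[Z_n] ≤ C 2^{n(1 - 2η + η² + aη - d)} = C 2^{-n(d - (δ - δ²/4) + ηε)}`. For `d > δ - δ²/4` and `ε`
small this is summable in `n`, so `∑ Z_n < ∞` almost surely, and `Z_n → 0`. Letting `d` decrease to
`δ - δ²/4` along a sequence gives the dimension bound.
-/

open MeasureTheory Filter Set

open scoped ENNReal NNReal Topology

/-- The weighted sum `2^{n(aη - d)} ∑_j Δ_{n,j}^η` over the dyadic intervals of generation `n`, where
`Δ_{n,j}` is the increment of `g` over the `j`-th one. -/
noncomputable def dyadCost (g : ℝ → ℝ) (a η d : ℝ) (n : ℕ) : ℝ≥0∞ :=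
  ∑ j : Fin (2 ^ n), ENNReal.ofReal ((2:ℝ) ^ ((n:ℝ) * (a * η - d))) *
    ENNReal.ofReal ((g (((j:ℕ):ℝ) / 2 ^ n + 1 / 2 ^ n) - g (((j:ℕ):ℝ) / 2 ^ n)) ^ η)

lemma exists_dyad_index {x : ℝ} (hx : x ∈ Ico (0:ℝ) 1) (n : ℕ) :
    ∃ j : Fin (2 ^ n), dyadLeft n x = ((j:ℕ):ℝ) / 2 ^ n ∧
      dyadRight n x = ((j:ℕ):ℝ) / 2 ^ n + 1 / 2 ^ n ∧
      x ∈ Icc (((j:ℕ):ℝ) / 2 ^ n) (((j:ℕ):ℝ) / 2 ^ n + 1 / 2 ^ n) := by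
  have hp : (0:ℝ) < 2 ^ n := by positivity
  have h0 : 0 ≤ x * 2 ^ n := mul_nonneg hx.1 hp.le
  have hlt : x * 2 ^ n < 2 ^ n := by nlinarith [hx.2]
  have hj : ⌊x * 2 ^ n⌋₊ < 2 ^ n := by
    rw [Nat.floor_lt h0]; push_cast; exact hlt
  have hc : ((⌊x * 2 ^ n⌋ : ℤ) : ℝ) = ((⌊x * 2 ^ n⌋₊ : ℕ) : ℝ) :=
    (natCast_floor_eq_intCast_floor h0).symm
  refine ⟨⟨_, hj⟩, ?_, ?_, ?_, ?_⟩
  · simp only [dyadLeft, hc]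
  · simp only [dyadRight, hc, add_div]
  · rw [div_le_iff₀ hp]
    exact Nat.floor_le h0
  · rw [← add_div, le_div_iff₀ hp]
    exact (Nat.lt_floor_add_one _).le

/-- An interval of generation `n` on which the increment `Δ` is at most `2^{-na}` has
`d`-dimensional weight at most its contribution to `dyadCost`. -/
lemma weight_le_of_increment_le {Δ a η d : ℝ} (hη : η ≤ 0) (n : ℕ) (hΔ : 0 < Δ)
    (hle : Δ ≤ (2:ℝ) ^ (-(n:ℝ) * a)) :
    ENNReal.ofReal (1 / 2 ^ n) ^ d ≤
      ENNReal.ofReal ((2:ℝ) ^ ((n:ℝ) * (a * η - d))) * ENNReal.ofReal (Δ ^ η) := by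
  rw [ENNReal.ofReal_rpow_of_pos (by positivity), ← ENNReal.ofReal_mul (by positivity)]
  apply ENNReal.ofReal_le_ofReal
  have h1 : ((1:ℝ) / 2 ^ n) ^ d = 2 ^ (-(n:ℝ) * d) := by
    rw [Real.rpow_mul (by norm_num), Real.rpow_neg (by norm_num), Real.rpow_natCast, one_div]
  have h2 : (2:ℝ) ^ (-(n:ℝ) * a * η) ≤ Δ ^ η := by
    rw [Real.rpow_mul (by norm_num)]
    exact Real.rpow_le_rpow_of_nonpos hΔ hle hη
  calc ((1:ℝ) / 2 ^ n) ^ d = 2 ^ ((n:ℝ) * (a * η - d)) * 2 ^ (-(n:ℝ) * a * η) := by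
        rw [h1, ← Real.rpow_add (by norm_num)]; ring_nf
    _ ≤ _ := by gcongr

/-- If `dyadCost` tends to `0`, covering by the generation-`n` intervals with small increment
shows that the set of points with small increments from generation `N` on is `μH[d]`-null. -/
lemma hausdorffMeasure_eq_zero_of_dyadCost {g : ℝ → ℝ} (hg : StrictMonoOn g (Icc 0 1))
    {a η d : ℝ} (hη : η ≤ 0) (hd : 0 < d)
    (hZ : Tendsto (dyadCost g a η d) atTop (𝓝 0)) (N : ℕ) :
    Measure.hausdorffMeasure d {x ∈ Ico (0:ℝ) 1 | ∀ n ≥ N,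
      g (dyadRight n x) - g (dyadLeft n x) ≤ (2:ℝ) ^ (-(n:ℝ) * a)} = 0 := by
  classical
  let t : ∀ n : ℕ, Fin (2 ^ n) → Set ℝ := fun n j =>
    if g (((j:ℕ):ℝ) / 2 ^ n + 1 / 2 ^ n) - g (((j:ℕ):ℝ) / 2 ^ n) ≤ (2:ℝ) ^ (-(n:ℝ) * a) then
      Icc (((j:ℕ):ℝ) / 2 ^ n) (((j:ℕ):ℝ) / 2 ^ n + 1 / 2 ^ n) else ∅
  have hdiam : ∀ n j, Metric.ediam (t n j) ≤ ENNReal.ofReal (1 / 2 ^ n) := by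
    intro n j
    simp only [t]
    split_ifs
    · rw [Real.ediam_Icc]; simp
    · simp
  have hr : Tendsto (fun n : ℕ => ENNReal.ofReal (1 / 2 ^ n)) atTop (𝓝 0) := by
    rw [← ENNReal.ofReal_zero]
    apply ENNReal.tendsto_ofReal
    simpa using tendsto_pow_atTop_nhds_zero_of_lt_one (r := (1/2:ℝ)) (by norm_num) (by norm_num)
  have key := Measure.hausdorffMeasure_le_liminf_sum d {x ∈ Ico (0:ℝ) 1 | ∀ n ≥ N,
      g (dyadRight n x) - g (dyadLeft n x) ≤ (2:ℝ) ^ (-(n:ℝ) * a)}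
      _ hr t (Eventually.of_forall hdiam) (by
        filter_upwards [eventually_ge_atTop N] with n hn x hx
        obtain ⟨j, hl, hri, hxj⟩ := exists_dyad_index hx.1 n
        have := hx.2 n hn
        rw [hl, hri] at this
        refine mem_iUnion.2 ⟨j, ?_⟩
        simp only [t, if_pos this]
        exact hxj)
  refine le_antisymm (key.trans ?_) zero_le
  rw [← hZ.liminf_eq]
  refine liminf_le_liminf (Eventually.of_forall fun n => ?_)
  refine Finset.sum_le_sum fun j _ => ?_
  by_cases hj : g (((j:ℕ):ℝ) / 2 ^ n + 1 / 2 ^ n) - g (((j:ℕ):ℝ) / 2 ^ n)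
      ≤ (2:ℝ) ^ (-(n:ℝ) * a)
  · refine (ENNReal.rpow_le_rpow (hdiam n j) hd.le).trans
      (weight_le_of_increment_le hη n ?_ hj)
    have hp : (0:ℝ) < 2 ^ n := by positivity
    have hlt : ((j:ℕ):ℝ) / 2 ^ n < ((j:ℕ):ℝ) / 2 ^ n + 1 / 2 ^ n := by
      have : (0:ℝ) < 1 / 2 ^ n := by positivity
      linarith
    have h0 : (0:ℝ) ≤ ((j:ℕ):ℝ) / 2 ^ n := by positivity
    have h1 : ((j:ℕ):ℝ) / 2 ^ n + 1 / 2 ^ n ≤ 1 := by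
      rw [← add_div, div_le_one hp]
      exact_mod_cast j.2
    exact sub_pos.2 (hg ⟨h0, hlt.le.trans h1⟩ ⟨h0.trans hlt.le, h1⟩ hlt)
  · simp only [t, if_neg hj, Metric.ediam_empty, ENNReal.zero_rpow_of_pos hd]
    exact zero_le

/-- First-moment argument: with `a = δ - ε` and `η = 1 - δ/2`, the series `∑ E[dyadCost]` is
dominated by a geometric series as soon as `d - (δ - δ²/4) + ηε > 0`. -/
lemma ae_tendsto_dyadCost {Ω : Type*} [MeasurableSpace Ω] (P : Measure Ω)
    (h : Ω → ℝ → ℝ) (hmeas : ∀ x : ℝ, Measurable fun ω => h ω x) (δ C : ℝ)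
    (hmom : ∀ n : ℕ, ∀ j : ℕ, j < 2 ^ n →
      (∫⁻ ω, ENNReal.ofReal
          ((h ω (((j:ℝ) + 1) / 2 ^ n) - h ω ((j:ℝ) / 2 ^ n)) ^ (1 - δ/2)) ∂P) ≤
        ENNReal.ofReal (C * ((2:ℝ) ^ (-(n:ℝ))) ^ (2 * (1 - δ/2) - (1 - δ/2) ^ 2)))
    {ε d : ℝ} (hκ : 0 < d - (δ - δ ^ 2 / 4) + (1 - δ/2) * ε) :
    ∀ᵐ ω ∂P, Tendsto (dyadCost (h ω) (δ - ε) (1 - δ/2) d) atTop (𝓝 0) := by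
  set κ := d - (δ - δ ^ 2 / 4) + (1 - δ/2) * ε with hκdef
  have hm : ∀ (n : ℕ) (j : Fin (2 ^ n)), Measurable fun ω => ENNReal.ofReal
      ((h ω (((j:ℕ):ℝ) / 2 ^ n + 1 / 2 ^ n) - h ω (((j:ℕ):ℝ) / 2 ^ n)) ^ (1 - δ/2)) :=
    fun n j => (((hmeas _).sub (hmeas _)).pow_const _).ennreal_ofReal
  have hmZ : ∀ n, Measurable fun ω => dyadCost (h ω) (δ - ε) (1 - δ/2) d n := fun n =>
    Finset.measurable_fun_sum _ fun j _ => (hm n j).const_mul _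
  have hbound : ∀ n : ℕ, ∫⁻ ω, dyadCost (h ω) (δ - ε) (1 - δ/2) d n ∂P ≤
      ENNReal.ofReal (C * ((2:ℝ) ^ (-κ)) ^ n) := by
    intro n
    simp only [dyadCost]
    rw [lintegral_finsetSum _ fun j _ => (hm n j).const_mul _]
    have hterm : ∀ j : Fin (2 ^ n), ∫⁻ ω, ENNReal.ofReal
          ((2:ℝ) ^ ((n:ℝ) * ((δ - ε) * (1 - δ/2) - d))) * ENNReal.ofReal
        ((h ω (((j:ℕ):ℝ) / 2 ^ n + 1 / 2 ^ n) - h ω (((j:ℕ):ℝ) / 2 ^ n)) ^ (1 - δ/2)) ∂P ≤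
        ENNReal.ofReal ((2:ℝ) ^ ((n:ℝ) * ((δ - ε) * (1 - δ/2) - d))) *
        ENNReal.ofReal (C * ((2:ℝ) ^ (-(n:ℝ))) ^ (2 * (1 - δ/2) - (1 - δ/2) ^ 2)) := by
      intro j
      rw [lintegral_const_mul _ (hm n j)]
      have := hmom n j j.2
      rw [add_div] at this
      gcongr
    refine (Finset.sum_le_sum fun j _ => hterm j).trans (le_of_eq ?_)
    rw [Finset.sum_const, Finset.card_univ, Fintype.card_fin,
      ← ENNReal.ofReal_mul (by positivity), ← ENNReal.ofReal_nsmul]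
    congr 1
    rw [nsmul_eq_mul, ← Real.rpow_mul (by norm_num), ← Real.rpow_natCast ((2:ℝ) ^ (-κ)) n,
      ← Real.rpow_mul (by norm_num)]
    push_cast
    rw [← Real.rpow_natCast 2 n]
    have : (2:ℝ) ^ (-κ * n) = 2 ^ (n:ℝ) * 2 ^ ((n:ℝ) * ((δ - ε) * (1 - δ/2) - d)) *
        2 ^ (-(n:ℝ) * (2 * (1 - δ/2) - (1 - δ/2) ^ 2)) := by
      rw [← Real.rpow_add (by norm_num), ← Real.rpow_add (by norm_num), hκdef]
      ring_nf
    rw [this]; ring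
  have hq0 : (0:ℝ) ≤ 2 ^ (-κ) := by positivity
  have hq1 : (2:ℝ) ^ (-κ) < 1 := Real.rpow_lt_one_of_one_lt_of_neg (by norm_num) (by linarith)
  have hsum : ∫⁻ ω, ∑' n, dyadCost (h ω) (δ - ε) (1 - δ/2) d n ∂P ≠ ∞ := by
    rw [lintegral_tsum fun n => (hmZ n).aemeasurable]
    refine ne_top_of_le_ne_top ?_ (ENNReal.tsum_le_tsum hbound)
    exact ((summable_geometric_of_lt_one hq0 hq1).mul_left C).tsum_ofReal_ne_top
  filter_upwards [ae_lt_top (Measurable.tsum hmZ) hsum] with ω hω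
  exact ENNReal.tendsto_atTop_zero_of_tsum_ne_top hω.ne

/-- The dimension bound with the moment hypothesis on dyadic intervals only, that is, with a natural
number `j` as index of the interval. In `stmt13` the index `j` ranges over all reals below `2 ^ n`. -/
theorem dimH_le_of_dyadic_moments {Ω : Type*} [MeasurableSpace Ω] (P : Measure Ω) [IsProbabilityMeasure P]
    (h : Ω → ℝ → ℝ)
    (hhomeo : ∀ ω, StrictMonoOn (h ω) (Icc 0 1) ∧ ContinuousOn (h ω) (Icc 0 1) ∧
      h ω 0 = 0 ∧ h ω 1 = 1)
    (hmeas : ∀ x : ℝ, Measurable fun ω => h ω x)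
    (δ : ℝ) (hδ : δ ∈ Ioo (2:ℝ) 4) (C : ℝ)
    (hmom : ∀ n : ℕ, ∀ j : ℕ, j < 2 ^ n →
      (∫⁻ ω, ENNReal.ofReal
          ((h ω (((j:ℝ) + 1) / 2 ^ n) - h ω ((j:ℝ) / 2 ^ n)) ^ (1 - δ/2)) ∂P) ≤
        ENNReal.ofReal (C * ((2:ℝ) ^ (-(n:ℝ))) ^ (2 * (1 - δ/2) - (1 - δ/2) ^ 2))) :
    ∀ᵐ ω ∂P,
      dimH {x ∈ Ico (0:ℝ) 1 | ∀ ε > (0:ℝ), ∃ N : ℕ, ∀ n ≥ N,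
          h ω (dyadRight n x) - h ω (dyadLeft n x) ≤ (2:ℝ) ^ (-(n:ℝ) * (δ - ε))} ≤
        ENNReal.ofReal (δ - δ ^ 2 / 4) := by
  obtain ⟨hδ2, hδ4⟩ := hδ
  have hD : 0 < δ - δ ^ 2 / 4 := by nlinarith
  have hη : 1 - δ/2 ≤ 0 := by linarith
  -- `ε = 1/(2(k+1))` is admissible for `d = δ - δ²/4 + 1/(k+1)` because `|η| < 1`.
  have hae : ∀ᵐ ω ∂P, ∀ k : ℕ, Tendsto (dyadCost (h ω) (δ - 1 / (2 * ((k:ℝ) + 1))) (1 - δ/2)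
      (δ - δ ^ 2 / 4 + 1 / ((k:ℝ) + 1))) atTop (𝓝 0) := by
    refine ae_all_iff.2 fun k => ae_tendsto_dyadCost P h hmeas δ C hmom ?_
    have hk : (0:ℝ) < (k:ℝ) + 1 := by positivity
    have : δ - δ ^ 2 / 4 + 1 / ((k:ℝ) + 1) - (δ - δ ^ 2 / 4) +
        (1 - δ/2) * (1 / (2 * ((k:ℝ) + 1))) = (3 - δ/2) / (2 * ((k:ℝ) + 1)) := by
      field_simp; ring
    rw [this]
    exact div_pos (by linarith) (by positivity)
  filter_upwards [hae] with ω hω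
  have hdim : ∀ k : ℕ, dimH {x ∈ Ico (0:ℝ) 1 | ∀ ε > (0:ℝ), ∃ N : ℕ, ∀ n ≥ N,
      h ω (dyadRight n x) - h ω (dyadLeft n x) ≤ (2:ℝ) ^ (-(n:ℝ) * (δ - ε))} ≤
      ENNReal.ofReal (δ - δ ^ 2 / 4 + 1 / ((k:ℝ) + 1)) := by
    intro k
    have hk : (0:ℝ) < 1 / ((k:ℝ) + 1) := by positivity
    have hd : 0 < δ - δ ^ 2 / 4 + 1 / ((k:ℝ) + 1) := by linarith
    refine dimH_le_of_hausdorffMeasure_ne_top (d := Real.toNNReal _) ?_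
    rw [Real.coe_toNNReal _ hd.le]
    refine ne_of_eq_of_ne (measure_mono_null (fun x hx => ?_) (measure_iUnion_null fun N =>
      hausdorffMeasure_eq_zero_of_dyadCost (hhomeo ω).1 hη hd (hω k) N)) (by simp)
    obtain ⟨N, hN⟩ := hx.2 (1 / (2 * ((k:ℝ) + 1))) (by positivity)
    exact mem_iUnion.2 ⟨N, hx.1, hN⟩
  refine ge_of_tendsto' (x := atTop) ?_ hdim
  apply ENNReal.tendsto_ofReal
  have hlim := (tendsto_one_div_add_atTop_nhds_zero_nat (𝕜 := ℝ)).const_add (δ - δ ^ 2 / 4)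
  rwa [add_zero] at hlim

/-- Multifractal upper bound (negative moments): let `h` be a random increasing homeomorphism
of `[0,1]`, `δ ∈ (2,4)`, `η := 1 - δ/2 ∈ (-1,0)`, and assume `E[|h(I)|^η] ≤ C|I|^{2η-η²}`
for every dyadic interval `I`. Then a.s. the set of `x` with lower dyadic exponent at least
`δ` (i.e. for every `ε > 0`, `|h(I_n(x))| ≤ 2^{-n(δ-ε)}` for all large `n`) has Hausdorff
dimension at most `δ - δ²/4`. -/
theorem stmt13 {Ω : Type*} [MeasurableSpace Ω] (P : Measure Ω) [IsProbabilityMeasure P]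
    (h : Ω → ℝ → ℝ)
    (hhomeo : ∀ ω, StrictMonoOn (h ω) (Icc 0 1) ∧ ContinuousOn (h ω) (Icc 0 1) ∧
      h ω 0 = 0 ∧ h ω 1 = 1)
    (hmeas : ∀ x : ℝ, Measurable fun ω => h ω x)
    (δ : ℝ) (hδ : δ ∈ Ioo (2:ℝ) 4) (C : ℝ) (hC : 0 < C)
    (hmom : ∀ n : ℕ, ∀ j < 2 ^ n,
      (∫⁻ ω, ENNReal.ofReal
          ((h ω (((j:ℝ) + 1) / 2 ^ n) - h ω ((j:ℝ) / 2 ^ n)) ^ (1 - δ/2)) ∂P) ≤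
        ENNReal.ofReal (C * ((2:ℝ) ^ (-(n:ℝ))) ^ (2 * (1 - δ/2) - (1 - δ/2) ^ 2))) :
    ∀ᵐ ω ∂P,
      dimH {x ∈ Ico (0:ℝ) 1 | ∀ ε > (0:ℝ), ∃ N : ℕ, ∀ n ≥ N,
          h ω (dyadRight n x) - h ω (dyadLeft n x) ≤ (2:ℝ) ^ (-(n:ℝ) * (δ - ε))} ≤
        ENNReal.ofReal (δ - δ ^ 2 / 4) := by
  refine dimH_le_of_dyadic_moments P h hhomeo hmeas δ hδ C fun n j hj => ?_
  exact hmom n j (by exact_mod_cast hj)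
end

section
/- Let (Ω, F, P) be a probability space and h a random increasing homeomorphism of [0,1] (for each ω, h_ω : [0,1] → [0,1] is a strictly increasing continuous bijection with h_ω(0)=0, h_ω(1)=1, and ω ↦ h_ω(x) is measurable for each x). Assume that for every β > 1 there exist q ∈ (0, 1/β) and M < ∞ such that E[(Σ_{I∈D_n} (n^{1/2}|h(I)|)^β)^q] ≤ M for every n ≥ 1. Then for every k > 1/2, almost surely dim_H h(E^{f_k}) ≤ 1 − 1/(2k), where E^{f_k} := {x ∈ [0,1) : |h(I_n(x))| ≥ (n log 2)^{−k} for infinitely many n}. -/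
/-!
Fix `s ∈ (1 - 1/(2k), 1)` and choose `β > 1` so close to `1` that `ε := β/2 - k(β - s)` is
positive. An interval with `|h(I)|` at least of order `n^{-k}` satisfies
`|h(I)|^s ≤ C n^{-ε} (n^{1/2}|h(I)|)^β` (`rpow_le_of_large`), so the large images of generation `n`
contribute at most `C n^{-ε} S_n` to an `s`-dimensional covering sum, where
`S_n = Σ_{I ∈ D_n} (n^{1/2}|h(I)|)^β`. Summing over all `n` would be too expensive, but covering
with the generations `n = 2^m` suffices: if `h(I_n(x))` is large and `2^m ≤ n < 2^{m+1}`, the image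
of the larger interval `I_{2^m}(x)` is large up to a constant factor (`dimH_image_le`). The series
`Σ_m 2^{-mε} S_{2^m}` converges almost surely, since its terms have geometrically decaying `q`-th
moments and `q ≤ 1` (`ae_tsum_ne_top`). A convergent covering series bounds the dimension of the
limsup set by `s` (`dimH_le_of_limsup_cover`), and `s` decreases to `1 - 1/(2k)` along a sequence.
-/

open MeasureTheory Filter Set

/-- Subadditivity of `t ↦ t ^ q` for `q ≤ 1`: a series converges if the series of `q`-th powers
does. -/
lemma tsum_ne_top_of_tsum_rpow_ne_top {a : ℕ → ENNReal} {q : ℝ} (hq : 0 < q) (hq1 : q ≤ 1)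
    (ha : ∑' m, a m ^ q ≠ ⊤) : ∑' m, a m ≠ ⊤ := by
  have hle : ∑' m, a m ≤ (∑' m, a m ^ q) ^ q⁻¹ := by
    rw [ENNReal.tsum_eq_iSup_sum]
    refine iSup_le fun s => ?_
    rw [ENNReal.le_rpow_inv_iff hq]
    refine le_trans ?_ (ENNReal.sum_le_tsum s)
    exact Finset.le_sum_of_subadditive (fun t : ENNReal => t ^ q) (by simp [hq])
      (fun x y => ENNReal.rpow_add_le_add_rpow x y hq.le hq1) s a
  exact ne_top_of_le_ne_top (ENNReal.rpow_ne_top_of_nonneg (by positivity) ha) hle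

/-- Hausdorff–Cantelli lemma: a limsup set of countably many sets has dimension at most `s` as
soon as the `s`-th powers of the diameters are summable. Convergence of the series also forces the
diameters in its tail to tend to `0`. -/
lemma dimH_le_of_limsup_cover {X : Type*} [EMetricSpace X] {s : ℝ} (hs : 0 < s) (K : ℕ → ℕ)
    (u : ∀ m, Fin (K m) → Set X) (hsum : ∑' m, ∑ j, Metric.ediam (u m j) ^ s ≠ ⊤) (E : Set X)
    (hE : ∀ x ∈ E, ∃ᶠ m in atTop, ∃ j, x ∈ u m j) : dimH E ≤ ENNReal.ofReal s := by
  borelize X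
  have hτ := ENNReal.tendsto_sum_nat_add (fun m => ∑ j, Metric.ediam (u m j) ^ s) hsum
  have hτs (N : ℕ) : ∑' i : (Σ m, Fin (K (m + N))), Metric.ediam (u (i.1 + N) i.2) ^ s =
      ∑' m, ∑ j, Metric.ediam (u (m + N) j) ^ s := by
    rw [ENNReal.tsum_sigma']
    simp
  refine dimH_le_of_hausdorffMeasure_ne_top (d := s.toNNReal) ?_
  rw [Real.coe_toNNReal s hs.le]
  have hr : Tendsto (fun N => (∑' m, ∑ j, Metric.ediam (u (m + N) j) ^ s) ^ s⁻¹) atTop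
      (nhds 0) := by
    have := (ENNReal.continuous_rpow_const (y := s⁻¹)).tendsto 0
    rw [ENNReal.zero_rpow_of_pos (by positivity)] at this
    exact this.comp hτ
  have key := Measure.hausdorffMeasure_le_liminf_tsum s E _ hr
    (ι := fun N => Σ m, Fin (K (m + N))) (fun N i => u (i.1 + N) i.2) ?_ ?_
  · refine ne_top_of_le_ne_top ENNReal.zero_ne_top (key.trans ?_)
    simp only [hτs]
    exact hτ.liminf_eq.le
  · refine Eventually.of_forall fun N i => ?_
    rw [ENNReal.le_rpow_inv_iff hs, ← hτs]
    exact ENNReal.le_tsum i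
  · refine Eventually.of_forall fun N x hx => ?_
    obtain ⟨m, hm, j, hj⟩ := (frequently_atTop.1 (hE x hx)) N
    obtain ⟨m, rfl⟩ := Nat.exists_eq_add_of_le' hm
    exact mem_iUnion.2 ⟨⟨m, j⟩, hj⟩

lemma dyadLeft_mono (x : ℝ) {p n : ℕ} (hpn : p ≤ n) : dyadLeft p x ≤ dyadLeft n x := by
  obtain ⟨d, rfl⟩ := Nat.exists_eq_add_of_le hpn
  unfold dyadLeft
  rw [div_le_div_iff₀ (by positivity) (by positivity), pow_add]
  have h1 : ⌊x * 2 ^ p⌋ * 2 ^ d ≤ ⌊x * (2 ^ p * 2 ^ d)⌋ := by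
    rw [Int.le_floor]
    push_cast
    rw [← mul_assoc]
    gcongr
    exact Int.floor_le _
  have h2 : (⌊x * 2 ^ p⌋ : ℝ) * 2 ^ d ≤ (⌊x * (2 ^ p * 2 ^ d)⌋ : ℝ) := by exact_mod_cast h1
  calc _ = ((⌊x * 2 ^ p⌋ : ℝ) * 2 ^ d) * 2 ^ p := by ring
    _ ≤ _ := by gcongr

lemma dyadRight_anti (x : ℝ) {p n : ℕ} (hpn : p ≤ n) : dyadRight n x ≤ dyadRight p x := by
  obtain ⟨d, rfl⟩ := Nat.exists_eq_add_of_le hpn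
  unfold dyadRight
  rw [div_le_div_iff₀ (by positivity) (by positivity), pow_add]
  have h1 : ⌊x * (2 ^ p * 2 ^ d)⌋ + 1 ≤ (⌊x * 2 ^ p⌋ + 1) * 2 ^ d := by
    rw [Int.add_one_le_iff, Int.floor_lt]
    push_cast
    rw [← mul_assoc]
    gcongr
    exact Int.lt_floor_add_one _
  have h2 : (⌊x * (2 ^ p * 2 ^ d)⌋ : ℝ) + 1 ≤ ((⌊x * 2 ^ p⌋ : ℝ) + 1) * 2 ^ d := by
    exact_mod_cast h1
  calc _ ≤ (((⌊x * 2 ^ p⌋ : ℝ) + 1) * 2 ^ d) * 2 ^ p := by gcongr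
    _ = _ := by ring

lemma exists_dyad_eq {x : ℝ} (hx : x ∈ Ico (0:ℝ) 1) (p : ℕ) :
    ∃ j : Fin (2 ^ p), dyadLeft p x = ((j : ℕ) : ℝ) / 2 ^ p ∧
      dyadRight p x = (((j : ℕ) : ℝ) + 1) / 2 ^ p := by
  have h0 : 0 ≤ ⌊x * 2 ^ p⌋ := Int.floor_nonneg.2 (mul_nonneg hx.1 (by positivity))
  have h1 : ⌊x * 2 ^ p⌋ < 2 ^ p := by
    rw [Int.floor_lt]
    push_cast
    exact mul_lt_of_lt_one_left (by positivity) hx.2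
  obtain ⟨j, hj⟩ := Int.eq_ofNat_of_zero_le h0
  rw [hj] at h1
  refine ⟨⟨j, by exact_mod_cast h1⟩, ?_, ?_⟩ <;> simp [dyadLeft, dyadRight, hj]

lemma dyad_mem {x : ℝ} (hx : x ∈ Ico (0:ℝ) 1) (p : ℕ) :
    0 ≤ dyadLeft p x ∧ dyadLeft p x ≤ x ∧ x ≤ dyadRight p x ∧ dyadRight p x ≤ 1 := by
  refine ⟨?_, ?_, ?_, ?_⟩
  · have := dyadLeft_mono x (Nat.zero_le p)
    refine le_trans ?_ this
    simpa [dyadLeft] using Int.floor_nonneg.2 hx.1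
  · unfold dyadLeft
    rw [div_le_iff₀ (by positivity)]
    exact Int.floor_le _
  · unfold dyadRight
    rw [le_div_iff₀ (by positivity)]
    exact (Int.lt_floor_add_one _).le
  · have := dyadRight_anti x (Nat.zero_le p)
    refine this.trans ?_
    have : ⌊x⌋ = 0 := Int.floor_eq_zero_iff.2 hx
    simp [dyadRight, this]

/-- The sum `Σ_{I ∈ D_n} (n^{1/2} |g(I)|) ^ β`. -/
noncomputable def dyadSum (g : ℝ → ℝ) (β : ℝ) (n : ℕ) : ℝ :=
  ∑ j ∈ Finset.range (2 ^ n),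
    ((n : ℝ) ^ ((1:ℝ)/2) * (g (((j:ℝ) + 1) / 2 ^ n) - g ((j:ℝ) / 2 ^ n))) ^ β

lemma dyad_increment_nonneg {g : ℝ → ℝ} (hg : MonotoneOn g (Icc 0 1)) {n j : ℕ}
    (hj : j < 2 ^ n) : 0 ≤ g (((j:ℝ) + 1) / 2 ^ n) - g ((j:ℝ) / 2 ^ n) := by
  have hj' : (j : ℝ) + 1 ≤ 2 ^ n := by exact_mod_cast hj
  have h1 : ((j:ℝ) + 1) / 2 ^ n ≤ 1 := (div_le_one (by positivity)).2 hj'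
  have h2 : (j:ℝ) / 2 ^ n ≤ ((j:ℝ) + 1) / 2 ^ n := by gcongr; linarith
  exact sub_nonneg.2 (hg ⟨by positivity, h2.trans h1⟩ ⟨by positivity, h1⟩ h2)

lemma dyadSum_nonneg {g : ℝ → ℝ} (hg : MonotoneOn g (Icc 0 1)) (β : ℝ) (n : ℕ) :
    0 ≤ dyadSum g β n :=
  Finset.sum_nonneg fun _ hj => Real.rpow_nonneg
    (mul_nonneg (by positivity) (dyad_increment_nonneg hg (Finset.mem_range.1 hj))) _

/-- Comparison of exponents: an increment `Δ` which is at least `(2N log 2)^{-k}` satisfies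
`Δ ^ s ≤ C N^{-ε} (N^{1/2} Δ) ^ β` with `ε = β / 2 - k (β - s)` and `C` independent of `N`. -/
lemma rpow_le_of_large {k s β Δ N : ℝ} (hsβ : s ≤ β) (hN : 0 < N)
    (hΔ : (2 * N * Real.log 2) ^ (-k) ≤ Δ) :
    Δ ^ s ≤ (2 * Real.log 2) ^ (k * (β - s)) *
      (N ^ (-(β / 2 - k * (β - s))) * (N ^ ((1:ℝ)/2) * Δ) ^ β) := by
  have hL : 0 < Real.log 2 := Real.log_pos one_lt_two
  have hΔ0 : 0 < Δ := lt_of_lt_of_le (by positivity) hΔ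
  have h1 : Δ ^ (-(β - s)) ≤ (2 * Real.log 2) ^ (k * (β - s)) * N ^ (k * (β - s)) := by
    rw [← Real.mul_rpow (by positivity) hN.le]
    calc Δ ^ (-(β - s)) ≤ ((2 * N * Real.log 2) ^ (-k)) ^ (-(β - s)) :=
          Real.rpow_le_rpow_of_nonpos (by positivity) hΔ (by linarith)
      _ = _ := by
          rw [← Real.rpow_mul (by positivity)]
          congr 1 <;> ring
  have h2 : N ^ (-(β / 2 - k * (β - s))) * (N ^ ((1:ℝ)/2) * Δ) ^ β =
      N ^ (k * (β - s)) * Δ ^ β := by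
    rw [Real.mul_rpow (by positivity) hΔ0.le, ← Real.rpow_mul hN.le, ← mul_assoc,
      ← Real.rpow_add hN]
    congr 2
    ring
  rw [h2, ← mul_assoc]
  calc Δ ^ s = Δ ^ (-(β - s)) * Δ ^ β := by rw [← Real.rpow_add hΔ0]; congr 1; ring
    _ ≤ _ := by gcongr

/-- The deterministic part. Only the generations `n = 2 ^ m` are used for covering: if
`2 ^ m ≤ n < 2 ^ (m + 1)`, a large interval `g(I_n(x))` forces `g(I_{2^m}(x))` to be at least
`(2 ^ (m + 1) log 2)^{-k}`. -/
lemma dimH_image_le {g : ℝ → ℝ} (hg : MonotoneOn g (Icc 0 1)) {k s β : ℝ} (hk : 0 < k)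
    (hs : 0 < s) (hsβ : s ≤ β)
    (hsum : ∑' m : ℕ, ENNReal.ofReal
      (((2:ℝ) ^ m) ^ (-(β / 2 - k * (β - s))) * dyadSum g β (2 ^ m)) ≠ ⊤) :
    dimH (g '' {x ∈ Ico (0:ℝ) 1 | ∃ᶠ n : ℕ in atTop,
      ((n : ℝ) * Real.log 2) ^ (-k) ≤ g (dyadRight n x) - g (dyadLeft n x)}) ≤
      ENNReal.ofReal s := by
  classical
  have hL : 0 < Real.log 2 := Real.log_pos one_lt_two
  let A : ℕ → ℕ → ℝ := fun m j => g ((j:ℝ) / 2 ^ (2 ^ m))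
  let B : ℕ → ℕ → ℝ := fun m j => g (((j:ℝ) + 1) / 2 ^ (2 ^ m))
  refine dimH_le_of_limsup_cover hs (fun m => 2 ^ (2 ^ m))
    (fun m j => if (2 * 2 ^ m * Real.log 2) ^ (-k) ≤ B m j - A m j
      then Icc (A m j) (B m j) else ∅) ?_ _ ?_
  · set C : ℝ := (2 * Real.log 2) ^ (k * (β - s)) with hC
    have hC0 : 0 ≤ C := by positivity
    refine ne_top_of_le_ne_top (ENNReal.mul_ne_top (ENNReal.ofReal_ne_top (r := C)) hsum) ?_
    rw [← ENNReal.tsum_mul_left]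
    refine ENNReal.tsum_le_tsum fun m => ?_
    rw [← ENNReal.ofReal_mul hC0, dyadSum, Finset.sum_range, Finset.mul_sum, Finset.mul_sum,
      ENNReal.ofReal_sum_of_nonneg]
    · refine Finset.sum_le_sum fun j _ => ?_
      split_ifs with hj
      · have h0 : 0 ≤ B m j - A m j := dyad_increment_nonneg hg j.2
        rw [Real.ediam_Icc, ENNReal.ofReal_rpow_of_nonneg h0 hs.le]
        refine ENNReal.ofReal_le_ofReal ?_
        have := rpow_le_of_large (s := s) hsβ (by positivity) hj
        simpa [A, B] using this
      · simp [hs]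
    · intro j _
      have h0 := dyad_increment_nonneg hg j.2
      positivity
  · rintro _ ⟨x, ⟨hx, hfreq⟩, rfl⟩
    rw [frequently_atTop] at hfreq ⊢
    intro N
    obtain ⟨n, hNn, hn⟩ := hfreq (2 ^ N)
    have hn0 : n ≠ 0 := by
      have : 0 < 2 ^ N := by positivity
      omega
    have hmn : 2 ^ Nat.log 2 n ≤ n := Nat.pow_log_le_self 2 hn0
    have hnm : n < 2 ^ (Nat.log 2 n + 1) := Nat.lt_pow_succ_log_self one_lt_two n
    refine ⟨Nat.log 2 n, Nat.le_log_of_pow_le one_lt_two hNn, ?_⟩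
    generalize Nat.log 2 n = m at hmn hnm
    obtain ⟨j, hjl, hjr⟩ := exists_dyad_eq hx (2 ^ m)
    obtain ⟨p0, p1, p2, p3⟩ := dyad_mem hx (2 ^ m)
    obtain ⟨n0, n1, n2, n3⟩ := dyad_mem hx n
    have hxm : x ∈ Icc (0:ℝ) 1 := ⟨hx.1, hx.2.le⟩
    have hlm : dyadLeft (2 ^ m) x ∈ Icc (0:ℝ) 1 := ⟨p0, p1.trans hxm.2⟩
    have hrm : dyadRight (2 ^ m) x ∈ Icc (0:ℝ) 1 := ⟨hxm.1.trans p2, p3⟩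
    have hA : A m j = g (dyadLeft (2 ^ m) x) := by rw [hjl]
    have hB : B m j = g (dyadRight (2 ^ m) x) := by rw [hjr]
    refine ⟨j, ?_⟩
    have hlarge : (2 * 2 ^ m * Real.log 2) ^ (-k) ≤ B m j - A m j := by
      rw [hA, hB]
      have h1 := hg hlm ⟨n0, n1.trans hxm.2⟩ (dyadLeft_mono x hmn)
      have h2 := hg ⟨hxm.1.trans n2, n3⟩ hrm (dyadRight_anti x hmn)
      have h3 : (2 * 2 ^ m * Real.log 2) ^ (-k) ≤ ((n : ℝ) * Real.log 2) ^ (-k) := by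
        refine Real.rpow_le_rpow_of_nonpos (by positivity) ?_ (by linarith)
        have : (n : ℝ) ≤ 2 * 2 ^ m := by
          rw [pow_succ'] at hnm
          exact_mod_cast hnm.le
        gcongr
      linarith
    rw [if_pos hlarge, hA, hB]
    exact ⟨hg hlm hxm p1, hg hxm hrm p2⟩

/-- The probabilistic part: a uniform bound on the `q`-th moments of `Σ_{I ∈ D_n} (n^{1/2}|h(I)|)^β`
makes the geometrically damped series along `n = 2 ^ m` almost surely convergent. -/
lemma ae_tsum_ne_top {Ω : Type*} [MeasurableSpace Ω] (P : Measure Ω) (h : Ω → ℝ → ℝ)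
    (hmono : ∀ ω, MonotoneOn (h ω) (Icc 0 1)) (hmeas : ∀ x : ℝ, Measurable fun ω => h ω x)
    {β q ε M : ℝ} (hq : 0 < q) (hq1 : q ≤ 1) (hε : 0 < ε)
    (hM : ∀ n : ℕ, 1 ≤ n →
      ∫⁻ ω, ENNReal.ofReal (dyadSum (h ω) β n ^ q) ∂P ≤ ENNReal.ofReal M) :
    ∀ᵐ ω ∂P, ∑' m : ℕ, ENNReal.ofReal
      (((2:ℝ) ^ m) ^ (-ε) * dyadSum (h ω) β (2 ^ m)) ≠ ⊤ := by
  have hmeasS (n : ℕ) : Measurable fun ω => ENNReal.ofReal (dyadSum (h ω) β n ^ q) := by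
    unfold dyadSum
    fun_prop
  have hpow (m : ℕ) : (((2:ℝ) ^ m) ^ (-ε)) ^ q = ((2:ℝ) ^ (-ε * q)) ^ m := by
    rw [← Real.rpow_natCast, ← Real.rpow_natCast, ← Real.rpow_mul (by positivity),
      ← Real.rpow_mul (by positivity), ← Real.rpow_mul (by positivity)]
    congr 1
    ring
  have hterm (ω : Ω) (m : ℕ) :
      ENNReal.ofReal (((2:ℝ) ^ m) ^ (-ε) * dyadSum (h ω) β (2 ^ m)) ^ q =
        ENNReal.ofReal ((2:ℝ) ^ (-ε * q)) ^ m *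
          ENNReal.ofReal (dyadSum (h ω) β (2 ^ m) ^ q) := by
    have h0 := dyadSum_nonneg (hmono ω) β (2 ^ m)
    rw [ENNReal.ofReal_rpow_of_nonneg (by positivity) hq.le, Real.mul_rpow (by positivity) h0,
      hpow, ENNReal.ofReal_mul (by positivity), ENNReal.ofReal_pow (by positivity)]
  have hfin : ∫⁻ ω, ∑' m : ℕ, ENNReal.ofReal ((2:ℝ) ^ (-ε * q)) ^ m *
      ENNReal.ofReal (dyadSum (h ω) β (2 ^ m) ^ q) ∂P ≠ ⊤ := by
    rw [lintegral_tsum fun m => ((hmeasS _).const_mul _).aemeasurable]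
    have hρ : ENNReal.ofReal ((2:ℝ) ^ (-ε * q)) < 1 := by
      rw [ENNReal.ofReal_lt_one]
      exact Real.rpow_lt_one_of_one_lt_of_neg one_lt_two (by nlinarith)
    have hgeo : (∑' m : ℕ, ENNReal.ofReal ((2:ℝ) ^ (-ε * q)) ^ m) * ENNReal.ofReal M ≠ ⊤ := by
      rw [ENNReal.tsum_geometric]
      exact ENNReal.mul_ne_top (ENNReal.inv_ne_top.2 (tsub_pos_of_lt hρ).ne')
        ENNReal.ofReal_ne_top
    refine ne_top_of_le_ne_top hgeo ?_
    rw [← ENNReal.tsum_mul_right]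
    refine ENNReal.tsum_le_tsum fun m => ?_
    rw [lintegral_const_mul _ (hmeasS _)]
    gcongr
    exact hM _ Nat.one_le_two_pow
  filter_upwards [ae_lt_top (Measurable.tsum fun m => (hmeasS _).const_mul _) hfin]
    with ω hω
  refine tsum_ne_top_of_tsum_rpow_ne_top hq hq1 ?_
  simp only [hterm]
  exact hω.ne

/-- Lemma 3.1 in abstract form: if `h` is a random increasing homeomorphism of `[0,1]` such
that for every `β > 1` there are `q ∈ (0,1/β)` and `M < ∞` with
`E[(Σ_{I∈D_n} (n^{1/2}|h(I)|)^β)^q] ≤ M` for all `n ≥ 1`, then for every `k > 1/2`, almost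
surely `dim_H h(E^{f_k}) ≤ 1 - 1/(2k)`, where
`E^{f_k} = {x ∈ [0,1) : |h(I_n(x))| ≥ (n log 2)^{-k} for infinitely many n}`. -/
theorem stmt14 {Ω : Type*} [MeasurableSpace Ω] (P : Measure Ω) [IsProbabilityMeasure P]
    (h : Ω → ℝ → ℝ)
    (hhomeo : ∀ ω, StrictMonoOn (h ω) (Icc 0 1) ∧ ContinuousOn (h ω) (Icc 0 1) ∧
      h ω 0 = 0 ∧ h ω 1 = 1)
    (hmeas : ∀ x : ℝ, Measurable fun ω => h ω x)
    (hmom : ∀ β > (1:ℝ), ∃ q ∈ Ioo (0:ℝ) (1/β), ∃ M : ℝ, ∀ n : ℕ, 1 ≤ n →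
      (∫⁻ ω, ENNReal.ofReal
          ((∑ j ∈ Finset.range (2 ^ n),
            ((n : ℝ) ^ ((1:ℝ)/2) *
              (h ω (((j:ℝ) + 1) / 2 ^ n) - h ω ((j:ℝ) / 2 ^ n))) ^ β) ^ q) ∂P) ≤
        ENNReal.ofReal M) :
    ∀ k > (1:ℝ)/2, ∀ᵐ ω ∂P,
      dimH (h ω '' {x ∈ Ico (0:ℝ) 1 | ∃ᶠ n : ℕ in atTop,
          ((n : ℝ) * Real.log 2) ^ (-k) ≤ h ω (dyadRight n x) - h ω (dyadLeft n x)}) ≤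
        ENNReal.ofReal (1 - 1 / (2 * k)) := by
  intro k hk
  have hk0 : 0 < k := by linarith
  have hd0 : 0 < 1 - 1 / (2 * k) := by
    rw [sub_pos, div_lt_one (by positivity)]
    linarith
  have hd1 : 1 - 1 / (2 * k) < 1 := by
    have : 0 < 1 / (2 * k) := by positivity
    linarith
  obtain ⟨u, -, hu, hlim⟩ := exists_seq_strictAnti_tendsto' hd1
  have hall : ∀ i, ∀ᵐ ω ∂P,
      dimH (h ω '' {x ∈ Ico (0:ℝ) 1 | ∃ᶠ n : ℕ in atTop,
          ((n : ℝ) * Real.log 2) ^ (-k) ≤ h ω (dyadRight n x) - h ω (dyadLeft n x)}) ≤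
        ENNReal.ofReal (u i) := by
    intro i
    obtain ⟨hs1, hs2⟩ := hu i
    have hks : k - 1 / 2 < k * u i := by
      have := mul_lt_mul_of_pos_left hs1 hk0
      have e : k * (1 - 1 / (2 * k)) = k - 1 / 2 := by field_simp
      rwa [e] at this
    have hk2 : 0 < k - 1 / 2 := by linarith
    -- Positivity of `ε = β / 2 - k * (β - u i)` is equivalent to `β < k * u i / (k - 1 / 2)`.
    obtain ⟨β, hβ1, hβ2⟩ := exists_between ((one_lt_div hk2).2 hks)
    rw [lt_div_iff₀ hk2] at hβ2
    obtain ⟨q, ⟨hq0, hq1⟩, M, hM⟩ := hmom β hβ1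
    have hq1' : q ≤ 1 := hq1.le.trans ((div_le_one (by linarith)).2 hβ1.le)
    filter_upwards [ae_tsum_ne_top P h (fun ω => (hhomeo ω).1.monotoneOn) hmeas hq0 hq1'
      (ε := β / 2 - k * (β - u i)) (by linarith) hM] with ω hω
    exact dimH_image_le (hhomeo ω).1.monotoneOn hk0 (hd0.trans hs1) (hs2.trans hβ1).le hω
  filter_upwards [ae_all_iff.2 hall] with ω hω
  exact ge_of_tendsto' (ENNReal.tendsto_ofReal hlim) hω
end
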